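/- arXiv:math/0605085 — 3 statements merged into one kernel-verified Lean document; each statement's English description precedes it below -/
import Mathlib

section
/- Let A ⊆ ⋀³V be a Lagrangian subspace for ω, let φ ∈ V^∨ be a nonzero linear functional and W := ker φ. Then F_φ ∩ Ann(A) ≠ {0} if and only if (⋀³W) ∩ A ≠ {0}, where F_φ := {φ∧ψ : ψ ∈ ⋀²(V^∨)} and Ann(A) ⊆ ⋀³(V^∨) is the annihilator of A. (This is the condition characterizing when the point [W] of the dual projective space lies on the EPW-sextic Y_{A^⊥}.) -/
/-!
The determinant pairing `⋀³(V^∨) × ⋀³V → ℂ` is perfect, so an element `ξ` of `⋀³(V^∨)` may be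
identified with a linear functional on `⋀³V`. In a basis of `V` whose first coordinate is `φ`, the
functionals in `F_φ` are those with no coefficient on a triple of basis vectors lying in `W = ker φ`;
that is, `F_φ = Ann(⋀³W)` (`mem_Fdual_iff`). Hence `F_φ ∩ Ann(A) = Ann(⋀³W + A)`, which is nonzero
iff `⋀³W + A ≠ ⋀³V`. As `dim ⋀³W = dim A = 10` and `dim ⋀³V = 20`, this happens iff
`⋀³W ∩ A ≠ 0` (`exists_dual_iff_inf_ne_bot`).
-/

open ExteriorAlgebra

noncomputable section

variable {V : Type*} [AddCommGroup V] [Module ℂ V]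

/-- The wedge product of two elements of the third exterior power, landing in the
sixth exterior power. -/
def wedge3 (α β : ⋀[ℂ]^3 V) : ⋀[ℂ]^6 V :=
  ⟨(α : ExteriorAlgebra ℂ V) * (β : ExteriorAlgebra ℂ V), by
    have h := Submodule.mul_mem_mul α.2 β.2
    rw [← pow_add] at h
    norm_num at h
    exact h⟩

/-- The form `ω(α,β) = vol(α ∧ β)` on the third exterior power. -/
def omegaForm (vol : (⋀[ℂ]^6 V) ≃ₗ[ℂ] ℂ) (α β : ⋀[ℂ]^3 V) : ℂ :=
  vol (wedge3 α β)

/-- The image of `⋀³W` in `⋀³V ⊆ ExteriorAlgebra ℂ V` under the map induced by the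
inclusion `W ↪ V` of a subspace. -/
def wedge3image (W : Submodule ℂ V) : Submodule ℂ (ExteriorAlgebra ℂ V) :=
  Submodule.map (ExteriorAlgebra.map W.subtype).toLinearMap (⋀[ℂ]^3 (↥W))

/-- The subspace `F_φ = {φ ∧ ψ : ψ ∈ ⋀²(V^∨)}` of the exterior algebra of the dual. -/
def Fdual (φ : Module.Dual ℂ V) :
    Submodule ℂ (ExteriorAlgebra ℂ (Module.Dual ℂ V)) :=
  Submodule.map (LinearMap.mulLeft ℂ (ι ℂ φ)) (⋀[ℂ]^2 (Module.Dual ℂ V))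

/-- The determinant pairing `⋀ⁿ(V^∨) × ⋀ⁿV → ℂ` is perfect: it carries the basis induced by
the coordinates of a basis of `V` to the dual of the induced basis of `⋀ⁿV`. -/
lemma pairingDual_eq_equiv {n m : ℕ} (b : Module.Basis (Fin m) ℂ V) :
    exteriorPower.pairingDual ℂ V n =
      ((b.dualBasis.exteriorPower n).equiv (b.exteriorPower n).dualBasis
        (Equiv.refl _)).toLinearMap := by
  refine (b.dualBasis.exteriorPower n).ext fun s => ?_
  rw [LinearEquiv.coe_coe, Module.Basis.equiv_apply, Equiv.refl_apply,
    Module.Basis.coe_dualBasis, exteriorPower.basis_coord, exteriorPower.basis_apply,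
    Module.Basis.coe_dualBasis]
  rfl

lemma pairingDual_bijective [FiniteDimensional ℂ V] (n : ℕ) :
    Function.Bijective (exteriorPower.pairingDual ℂ V n) := by
  rw [pairingDual_eq_equiv (Module.finBasis ℂ V)]
  exact LinearEquiv.bijective _

lemma repr_dual_exteriorPower {n m : ℕ} (b : Module.Basis (Fin m) ℂ V)
    (ξ : ⋀[ℂ]^n (Module.Dual ℂ V)) (s : Set.powersetCard (Fin m) n) :
    (b.dualBasis.exteriorPower n).repr ξ s =
      exteriorPower.pairingDual ℂ V n ξ (exteriorPower.ιMulti_family ℂ n b s) := by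
  have h (B : Module.Basis (Set.powersetCard (Fin m) n) ℂ (Module.Dual ℂ (⋀[ℂ]^n V))) :
      B.repr ((b.dualBasis.exteriorPower n).equiv B (Equiv.refl _) ξ) =
        (b.dualBasis.exteriorPower n).repr ξ := by
    ext; simp [Module.Basis.equiv]
  rw [← h (b.exteriorPower n).dualBasis, Module.Basis.dualBasis_repr, pairingDual_eq_equiv b,
    exteriorPower.basis_apply]
  rfl

/-- The pairing `p` is determined by the determinant formula. -/
lemma eq_pairingDual (p : (⋀[ℂ]^3 (Module.Dual ℂ V)) →ₗ[ℂ] (⋀[ℂ]^3 V) →ₗ[ℂ] ℂ)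
    (hp : ∀ (φ : Fin 3 → Module.Dual ℂ V) (v : Fin 3 → V),
      p ⟨ιMulti ℂ 3 φ, ιMulti_range ℂ 3 (Set.mem_range_self φ)⟩
        ⟨ιMulti ℂ 3 v, ιMulti_range ℂ 3 (Set.mem_range_self v)⟩ =
        Matrix.det (Matrix.of fun i j => φ i (v j))) :
    p = exteriorPower.pairingDual ℂ V 3 := by
  refine exteriorPower.linearMap_ext (AlternatingMap.ext fun f => ?_)
  refine exteriorPower.linearMap_ext (AlternatingMap.ext fun v => ?_)
  refine (hp f v).trans ?_
  rw [← Matrix.det_transpose]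
  exact (exteriorPower.pairingDual_ιMulti_ιMulti f v).symm

/-- A nonzero functional is the first coordinate of some basis. -/
lemma exists_basis_coord_zero [FiniteDimensional ℂ V] {m : ℕ}
    (hdim : Module.finrank ℂ V = m + 1) (φ : Module.Dual ℂ V) (hφ : φ ≠ 0) :
    ∃ b : Module.Basis (Fin (m + 1)) ℂ V, b.coord 0 = φ := by
  obtain ⟨v, hv⟩ : ∃ v, φ v = 1 := LinearMap.surjective hφ 1
  have hker : Module.finrank ℂ (LinearMap.ker φ) = m := by
    have := Module.Dual.finrank_ker_add_one_of_ne_zero hφ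
    omega
  let b := Module.Basis.mkFinCons v (Module.finBasisOfFinrankEq ℂ _ hker)
    (fun c x hx h => by
      have := congrArg φ h
      rwa [map_add, map_smul, hv, LinearMap.mem_ker.1 hx, map_zero, add_zero, smul_eq_mul,
        mul_one] at this)
    (fun z => ⟨-φ z, by simp [hv]⟩)
  have hb : ⇑b = Fin.cons v ((↑) ∘ Module.finBasisOfFinrankEq ℂ _ hker) :=
    Module.Basis.coe_mkFinCons ..
  refine ⟨b, b.ext fun i => ?_⟩
  rw [Module.Basis.coord_apply, Module.Basis.repr_self, hb]
  refine Fin.cases ?_ (fun j => ?_) i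
  · simp [hv]
  · have := LinearMap.mem_ker.1 (Module.finBasisOfFinrankEq ℂ _ hker j).2
    simp [this]

/-- `F_φ` is exactly the annihilator of `⋀³(ker φ)`. -/
lemma mem_Fdual_iff [FiniteDimensional ℂ V] (hdim : Module.finrank ℂ V = 6)
    (φ : Module.Dual ℂ V) (hφ : φ ≠ 0) (ξ : ⋀[ℂ]^3 (Module.Dual ℂ V)) :
    (ξ : ExteriorAlgebra ℂ (Module.Dual ℂ V)) ∈ Fdual φ ↔
      LinearMap.range (exteriorPower.map 3 (LinearMap.ker φ).subtype) ≤
        LinearMap.ker (exteriorPower.pairingDual ℂ V 3 ξ) := by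
  constructor
  · rintro ⟨ψ, hψ, h⟩
    -- It suffices to treat decomposable `ψ`, for which the pairing with `w₀ ∧ w₁ ∧ w₂` is a
    -- determinant having the zero vector `(φ (wⱼ))ⱼ` as a row or column.
    have key : Submodule.span ℂ (Set.range (ιMulti ℂ 2 (M := Module.Dual ℂ V))) ≤
        Submodule.comap (LinearMap.mulLeft ℂ (ι ℂ φ))
          (Submodule.map (⋀[ℂ]^3 (Module.Dual ℂ V)).subtype
            (LinearMap.ker ((exteriorPower.map 3 (LinearMap.ker φ).subtype).dualMap ∘ₗ
              exteriorPower.pairingDual ℂ V 3))) := by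
      rw [Submodule.span_le]
      rintro _ ⟨g, rfl⟩
      refine ⟨exteriorPower.ιMulti ℂ 3 (Matrix.vecCons φ g), ?_, ?_⟩
      · refine LinearMap.mem_ker.2 (exteriorPower.linearMap_ext (AlternatingMap.ext fun w => ?_))
        simp only [LinearMap.compAlternatingMap_apply, LinearMap.comp_apply,
          LinearMap.dualMap_apply, exteriorPower.map_apply_ιMulti,
          exteriorPower.pairingDual_ιMulti_ιMulti]
        refine Matrix.det_eq_zero_of_column_eq_zero 0 fun i => ?_
        exact LinearMap.mem_ker.1 (w i).2
      · simp [ExteriorAlgebra.ιMulti_succ_apply (n := 2), Matrix.vecTail, Function.comp_def]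
    rw [ExteriorAlgebra.ιMulti_span_fixedDegree] at key
    obtain ⟨ξ', hξ', e⟩ := key hψ
    obtain rfl : ξ' = ξ := Subtype.ext (e.trans h)
    rintro _ ⟨x, rfl⟩
    exact LinearMap.congr_fun (LinearMap.mem_ker.1 hξ') x
  · intro h
    obtain ⟨b, rfl⟩ := exists_basis_coord_zero hdim φ hφ
    rw [← (b.dualBasis.exteriorPower 3).sum_repr ξ, Submodule.coe_sum]
    refine Submodule.sum_mem _ fun s _ => ?_
    rw [Submodule.coe_smul, repr_dual_exteriorPower]
    set σ := Set.powersetCard.ofFinEmbEquiv.symm s with hσ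
    by_cases h0 : σ 0 = 0
    · refine Submodule.smul_mem _ _
        ⟨ιMulti ℂ 2 (Matrix.vecTail (b.dualBasis ∘ σ)), ?_, ?_⟩
      · exact ιMulti_range ℂ 2 (Set.mem_range_self _)
      · rw [exteriorPower.basis_apply]
        refine Eq.trans ?_ (ExteriorAlgebra.ιMulti_succ_apply (b.dualBasis ∘ σ)).symm
        simp [h0]
    · -- `σ` is increasing, so it misses the index `0` altogether.
      have hpos : ∀ i, σ i ≠ 0 := fun i hi =>
        h0 (le_antisymm (hi ▸ σ.monotone (Fin.zero_le i)) (Fin.zero_le _))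
      have hz := h (show exteriorPower.ιMulti_family ℂ 3 b s ∈ _ from
        ⟨exteriorPower.ιMulti ℂ 3 fun i => ⟨b (σ i), by simp [hpos i]⟩,
          exteriorPower.map_apply_ιMulti _ _⟩)
      rw [LinearMap.mem_ker.1 hz, zero_smul]
      exact Submodule.zero_mem _

/-- Two subspaces of complementary dimensions have a common nonzero annihilating functional
iff they have a common nonzero vector. -/
lemma exists_dual_iff_inf_ne_bot {X : Type*} [AddCommGroup X] [Module ℂ X]
    [FiniteDimensional ℂ X] (U A : Submodule ℂ X)
    (h : Module.finrank ℂ U + Module.finrank ℂ A = Module.finrank ℂ X) :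
    (∃ l : Module.Dual ℂ X, l ≠ 0 ∧ U ≤ LinearMap.ker l ∧ A ≤ LinearMap.ker l) ↔
      U ⊓ A ≠ ⊥ := by
  have hsum := Submodule.finrank_sup_add_finrank_inf_eq U A
  have htop : U ⊓ A = ⊥ ↔ U ⊔ A = ⊤ := by
    rw [← Submodule.finrank_eq_zero (R := ℂ)]
    constructor
    · exact fun h0 => Submodule.eq_top_of_finrank_eq (by omega)
    · intro h1
      rw [h1, finrank_top] at hsum
      omega
  rw [Ne, htop]
  constructor
  · rintro ⟨l, hl, hU, hA⟩ e
    exact hl (LinearMap.ker_eq_top.1 (top_le_iff.1 (e ▸ sup_le hU hA)))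
  · intro hne
    obtain ⟨l, hl, hle⟩ := Submodule.exists_le_ker_of_lt_top _ (lt_top_iff_ne_top.2 hne)
    exact ⟨l, hl, le_sup_left.trans hle, le_sup_right.trans hle⟩

lemma wedge3image_eq (W : Submodule ℂ V) :
    wedge3image W = Submodule.map (⋀[ℂ]^3 V).subtype
      (LinearMap.range (exteriorPower.map 3 W.subtype)) := by
  have h : (ExteriorAlgebra.map W.subtype).toLinearMap ∘ₗ (⋀[ℂ]^3 W).subtype =
      (⋀[ℂ]^3 V).subtype ∘ₗ exteriorPower.map 3 W.subtype := by
    refine exteriorPower.linearMap_ext (AlternatingMap.ext fun w => ?_)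
    simp only [LinearMap.compAlternatingMap_apply, LinearMap.comp_apply, Submodule.subtype_apply,
      exteriorPower.map_apply_ιMulti, exteriorPower.ιMulti_apply_coe]
    exact ExteriorAlgebra.map_apply_ιMulti W.subtype w
  rw [← LinearMap.range_comp, ← h, LinearMap.range_comp, Submodule.range_subtype]
  rfl

/-- let `A ⊆ ⋀³V` be Lagrangian for `ω`, `0 ≠ φ ∈ V^∨` and `W = ker φ`.
Then `F_φ ∩ Ann(A) ≠ 0` if and only if `⋀³W ∩ A ≠ 0`, where the annihilator is taken
with respect to the canonical duality pairing `p` (characterized on decomposables by the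
determinant formula). -/
theorem Fdual_inter_ann_ne_bot_iff (V : Type*) [AddCommGroup V] [Module ℂ V]
    [FiniteDimensional ℂ V] (hdim : Module.finrank ℂ V = 6)
    (vol : (⋀[ℂ]^6 V) ≃ₗ[ℂ] ℂ)
    (p : (⋀[ℂ]^3 (Module.Dual ℂ V)) →ₗ[ℂ] (⋀[ℂ]^3 V) →ₗ[ℂ] ℂ)
    (hp : ∀ (φ : Fin 3 → Module.Dual ℂ V) (v : Fin 3 → V),
      p ⟨ιMulti ℂ 3 φ, ιMulti_range ℂ 3 (Set.mem_range_self φ)⟩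
        ⟨ιMulti ℂ 3 v, ιMulti_range ℂ 3 (Set.mem_range_self v)⟩ =
        Matrix.det (Matrix.of fun i j => φ i (v j)))
    (A : Submodule ℂ (ExteriorAlgebra ℂ V)) (hA : A ≤ ⋀[ℂ]^3 V)
    (hA10 : Module.finrank ℂ A = 10)
    (hALag : ∀ α β : ⋀[ℂ]^3 V, (α : ExteriorAlgebra ℂ V) ∈ A →
      (β : ExteriorAlgebra ℂ V) ∈ A → omegaForm vol α β = 0)
    (φ : Module.Dual ℂ V) (hφ : φ ≠ 0) :
    (∃ ξ : ⋀[ℂ]^3 (Module.Dual ℂ V), ξ ≠ 0 ∧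
        (ξ : ExteriorAlgebra ℂ (Module.Dual ℂ V)) ∈ Fdual φ ∧
        ∀ b : ⋀[ℂ]^3 V, (b : ExteriorAlgebra ℂ V) ∈ A → p ξ b = 0) ↔
    (∃ y : ExteriorAlgebra ℂ V, y ≠ 0 ∧
        y ∈ wedge3image (LinearMap.ker φ) ∧ y ∈ A) := by
  obtain rfl := eq_pairingDual p hp
  have hker : Module.finrank ℂ (LinearMap.ker φ) = 5 := by
    have := Module.Dual.finrank_ker_add_one_of_ne_zero hφ
    omega
  have hU : Module.finrank ℂ
      (LinearMap.range (exteriorPower.map 3 (LinearMap.ker φ).subtype)) = 10 := by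
    rw [LinearMap.finrank_range_of_inj
      (exteriorPower.map_injective_field (Submodule.subtype_injective _)),
      exteriorPower.finrank_eq, hker]
    rfl
  have hA' : Module.finrank ℂ (A.comap (⋀[ℂ]^3 V).subtype) = 10 :=
    (Submodule.comapSubtypeEquivOfLe hA).finrank_eq.trans hA10
  have hX : Module.finrank ℂ (⋀[ℂ]^3 V) = 20 := by
    rw [exteriorPower.finrank_eq, hdim]
    rfl
  have main := exists_dual_iff_inf_ne_bot
    (LinearMap.range (exteriorPower.map 3 (LinearMap.ker φ).subtype))
    (A.comap (⋀[ℂ]^3 V).subtype) (by rw [hU, hA', hX])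
  have hbij := pairingDual_bijective (V := V) 3
  rw [hbij.surjective.exists, Submodule.ne_bot_iff] at main
  rw [wedge3image_eq]
  constructor
  · rintro ⟨ξ, hξ, hF, hAnn⟩
    obtain ⟨x, ⟨hxU, hxA⟩, hx⟩ := main.1 ⟨ξ, (map_ne_zero_iff _ hbij.injective).2 hξ,
      (mem_Fdual_iff hdim φ hφ ξ).1 hF, fun b hb => hAnn b hb⟩
    exact ⟨x, fun h => hx (Subtype.ext h), ⟨x, hxU, rfl⟩, hxA⟩
  · rintro ⟨_, hy, ⟨x, hxU, rfl⟩, hxA⟩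
    obtain ⟨ξ, hξ, hF, hAnn⟩ := main.2 ⟨x, ⟨hxU, hxA⟩, fun h => hy (by rw [h, map_zero])⟩
    exact ⟨ξ, (map_ne_zero_iff _ hbij.injective).1 hξ, (mem_Fdual_iff hdim φ hφ ξ).2 hF,
      fun b hb => hAnn hb⟩

end
end

section
/- Let A ⊆ ⋀³V be a Lagrangian subspace for ω and let W ⊆ V be a 5-dimensional subspace with (⋀³W) ∩ A ≠ {0}. Then there exists a nonzero vector v ∈ W such that F_v ∩ A ≠ {0}, where F_v := {v∧w : w ∈ ⋀²V} (i.e., the point [v] lies on the EPW-sextic Y_A). -/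
/-!
When `dim W = 5`, every `y ∈ ⋀³W` lies in `F_w` for some nonzero `w ∈ W`; this is applied to a
nonzero `y ∈ ⋀³W ∩ A`.

Since `⋀⁵W` is a line, `(u, w) ↦ u ∧ w ∧ y` is an alternating form on the odd-dimensional
space `W`, hence degenerate: some `w ≠ 0` satisfies `u ∧ (w ∧ y) = 0` for all `u ∈ W`
(`exists_degenerate_vector`). Contraction with linear forms does the rest.

* If `z` has degree `k`, then Euler's identity `∑ bᵢ ∧ (bᵢ* ⌋ z) = k z` holds
  (`sum_ι_mul_contraction`), while `u ∧ z = 0` implies `z = u ∧ (d ⌋ z)` whenever `d u = 1`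
  (`eq_ι_mul_contraction`). For `z = w ∧ y`, killed by every `bᵢ`, adding up the second identity
  gives `5 z = 4 z`, so `w ∧ y = 0`.
* The second identity, applied to `w ∧ y = 0`, gives `y = w ∧ (d ⌋ y)` with `d ⌋ y ∈ ⋀²W`.
-/

open ExteriorAlgebra

noncomputable section

variable {V : Type*} [AddCommGroup V] [Module ℂ V]

/-- The subspace `F_v = {v ∧ w : w ∈ ⋀²V}` of the exterior algebra. -/
def Fsub (v : V) : Submodule ℂ (ExteriorAlgebra ℂ V) :=
  Submodule.map (LinearMap.mulLeft ℂ (ι ℂ v)) (⋀[ℂ]^2 V)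

section Contraction

variable {U : Type*} [AddCommGroup U] [Module ℂ U]

/-- Contraction `d ⌋ ·` of the exterior algebra with a linear form `d`, obtained by viewing the
exterior algebra as the Clifford algebra of the zero quadratic form. -/
def contraction (d : Module.Dual ℂ U) : ExteriorAlgebra ℂ U →ₗ[ℂ] ExteriorAlgebra ℂ U :=
  CliffordAlgebra.contractLeft (Q := (0 : QuadraticForm ℂ U)) d

lemma contraction_ι_mul (d : Module.Dual ℂ U) (a : U) (x : ExteriorAlgebra ℂ U) :
    contraction d (ι ℂ a * x) = d a • x - ι ℂ a * contraction d x :=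
  CliffordAlgebra.contractLeft_ι_mul (Q := (0 : QuadraticForm ℂ U)) (d := d) a x

lemma contraction_algebraMap (d : Module.Dual ℂ U) (r : ℂ) :
    contraction d (algebraMap ℂ (ExteriorAlgebra ℂ U) r) = 0 :=
  CliffordAlgebra.contractLeft_algebraMap (Q := (0 : QuadraticForm ℂ U)) d r

lemma ι_mul_mem {n : ℕ} (a : U) {x : ExteriorAlgebra ℂ U} (hx : x ∈ ⋀[ℂ]^n U) :
    ι ℂ a * x ∈ ⋀[ℂ]^(n + 1) U := by
  rw [exteriorPower, pow_succ']
  exact Submodule.mul_mem_mul ⟨a, rfl⟩ hx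

lemma contraction_mem (d : Module.Dual ℂ U) (n : ℕ) (x : ExteriorAlgebra ℂ U)
    (hx : x ∈ ⋀[ℂ]^(n + 1) U) : contraction d x ∈ ⋀[ℂ]^n U := by
  induction n generalizing x with
  | zero =>
    rw [exteriorPower, zero_add, pow_one] at hx
    obtain ⟨a, rfl⟩ := hx
    have h := contraction_ι_mul d a 1
    rw [← map_one (algebraMap ℂ (ExteriorAlgebra ℂ U)), contraction_algebraMap, map_one,
      mul_one, mul_zero, sub_zero] at h
    rw [h, exteriorPower, pow_zero]
    exact Submodule.smul_mem _ _ (Submodule.one_le.mp le_rfl)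
  | succ n ih =>
    rw [exteriorPower, pow_succ'] at hx
    induction hx using Submodule.mul_induction_on' with
    | mem_mul_mem m hm y hy =>
      obtain ⟨a, rfl⟩ := hm
      rw [contraction_ι_mul]
      exact Submodule.sub_mem _ (Submodule.smul_mem _ _ hy) (ι_mul_mem a (ih y hy))
    | add x _ y _ hx hy =>
      rw [map_add]
      exact Submodule.add_mem _ hx hy

lemma eq_ι_mul_contraction {d : Module.Dual ℂ U} {u : U} (hd : d u = 1)
    {z : ExteriorAlgebra ℂ U} (hz : ι ℂ u * z = 0) : z = ι ℂ u * contraction d z := by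
  have h := contraction_ι_mul d u z
  rw [hz, map_zero, hd, one_smul] at h
  exact sub_eq_zero.mp h.symm

lemma ι_mul_ι_mul_swap (u w : U) (x : ExteriorAlgebra ℂ U) :
    ι ℂ u * (ι ℂ w * x) = -(ι ℂ w * (ι ℂ u * x)) := by
  rw [← mul_assoc, ← mul_assoc, ← neg_mul, eq_neg_of_add_eq_zero_left (ι_add_mul_swap u w)]

/-- Euler's identity: `∑ bᵢ ∧ (bᵢ* ⌋ ·)` multiplies elements of degree `n` by `n`. -/
lemma sum_ι_mul_contraction {I : Type*} [Fintype I] (b : Module.Basis I ℂ U) {n : ℕ}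
    {x : ExteriorAlgebra ℂ U} (hx : x ∈ ⋀[ℂ]^n U) :
    ∑ i, ι ℂ (b i) * contraction (b.coord i) x = (n : ℂ) • x := by
  induction hx using Submodule.pow_induction_on_left' with
  | algebraMap r => simp [contraction_algebraMap]
  | add x y i hx hy h1 h2 => simp only [map_add, mul_add, Finset.sum_add_distrib, h1, h2, smul_add]
  | mem_mul m hm i x hx ih =>
    obtain ⟨a, rfl⟩ := hm
    have h1 : ∑ i, ι ℂ (b i) * (b.coord i a • x) = ι ℂ a * x := by
      simp only [mul_smul_comm, ← smul_mul_assoc, ← Finset.sum_mul, ← map_smul, ← map_sum,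
        Module.Basis.coord_apply, b.sum_repr]
    have h2 : ∑ i, ι ℂ (b i) * (ι ℂ a * contraction (b.coord i) x)
        = -(ι ℂ a * ((i : ℂ) • x)) := by
      rw [← ih, Finset.mul_sum, ← Finset.sum_neg_distrib]
      exact Finset.sum_congr rfl fun j _ => ι_mul_ι_mul_swap _ _ _
    simp only [contraction_ι_mul, mul_sub, Finset.sum_sub_distrib, h1, h2]
    rw [mul_smul_comm, Nat.succ_eq_add_one, Nat.cast_add, Nat.cast_one, add_smul, one_smul]
    abel

/-- The wedge pairing between `U` and `⋀ⁿU` has no kernel on the right, except in top degree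
`n = dim U`. -/
lemma eq_zero_of_forall_ι_mul_eq_zero [FiniteDimensional ℂ U] {n : ℕ}
    (hn : n ≠ Module.finrank ℂ U) {z : ExteriorAlgebra ℂ U} (hz : z ∈ ⋀[ℂ]^n U)
    (h : ∀ u : U, ι ℂ u * z = 0) : z = 0 := by
  have b := Module.finBasis ℂ U
  have h1 := sum_ι_mul_contraction b hz
  have h2 : ∀ i, ι ℂ (b i) * contraction (b.coord i) z = z := fun i =>
    (eq_ι_mul_contraction (by simp) (h (b i))).symm
  simp only [h2, Finset.sum_const, Finset.card_univ, Fintype.card_fin] at h1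
  rw [← Nat.cast_smul_eq_nsmul ℂ, ← sub_eq_zero, ← sub_smul, smul_eq_zero, sub_eq_zero,
    Nat.cast_inj] at h1
  exact h1.resolve_left (Ne.symm hn)

/-- The form `(u, w) ↦ u ∧ w ∧ y` with values in the line `⋀⁵U` is alternating on an
odd-dimensional space, so it is degenerate. -/
lemma exists_degenerate_vector [FiniteDimensional ℂ U] (hU : Module.finrank ℂ U = 5)
    {y : ExteriorAlgebra ℂ U} (hy : y ∈ ⋀[ℂ]^3 U) :
    ∃ w : U, w ≠ 0 ∧ ∀ u : U, ι ℂ u * (ι ℂ w * y) = 0 := by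
  have h5 : Module.finrank ℂ (⋀[ℂ]^5 U) = Module.finrank ℂ ℂ := by
    rw [exteriorPower.finrank_eq, hU, Module.finrank_self, Nat.choose_self]
  have e : ⋀[ℂ]^5 U ≃ₗ[ℂ] ℂ := by
    have : FiniteDimensional ℂ (⋀[ℂ]^5 U) := Module.finite_of_finrank_pos (by rw [h5]; simp)
    exact LinearEquiv.ofFinrankEq _ _ h5
  obtain ⟨f, hf⟩ := LinearMap.exists_extend e.toLinearMap
  have hf0 : ∀ x ∈ ⋀[ℂ]^5 U, f x = 0 → x = 0 := by
    intro x hx h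
    have h' : e ⟨x, hx⟩ = 0 := by
      rw [← h]
      exact (LinearMap.congr_fun hf ⟨x, hx⟩).symm
    simpa using h'
  have b := Module.finBasisOfFinrankEq ℂ U hU
  let M : Matrix (Fin 5) (Fin 5) ℂ := Matrix.of fun i j => f (ι ℂ (b i) * (ι ℂ (b j) * y))
  have hM : M.transpose = -M := by
    ext i j
    simp only [M, Matrix.transpose_apply, Matrix.neg_apply, Matrix.of_apply]
    rw [ι_mul_ι_mul_swap, map_neg]
  have hdet : M.det = 0 := by
    have h := congrArg Matrix.det hM
    rw [Matrix.det_transpose, Matrix.det_neg, Fintype.card_fin] at h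
    linear_combination h / 2
  obtain ⟨c, hc, hMc⟩ := Matrix.exists_mulVec_eq_zero_iff.mpr hdet
  refine ⟨∑ j, c j • b j, fun h => hc ?_, fun u => ?_⟩
  · ext j
    exact Fintype.linearIndependent_iff.mp b.linearIndependent c h j
  · apply hf0 _ (ι_mul_mem _ (ι_mul_mem _ hy))
    have hb : ∀ i, f (ι ℂ (b i) * (ι ℂ (∑ j, c j • b j) * y)) = 0 := by
      intro i
      have h := congrFun hMc i
      simp only [Matrix.mulVec, dotProduct, M, Matrix.of_apply, Pi.zero_apply] at h
      rw [← h]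
      simp [Finset.sum_mul, Finset.mul_sum, mul_comm]
    rw [← b.sum_repr u]
    simp only [map_sum, map_smul, Finset.sum_mul, smul_mul_assoc] at hb ⊢
    simp [hb]

/-- Every trivector on a five-dimensional space is divisible by a nonzero vector. -/
lemma exists_eq_ι_mul [FiniteDimensional ℂ U] (hU : Module.finrank ℂ U = 5)
    {y : ExteriorAlgebra ℂ U} (hy : y ∈ ⋀[ℂ]^3 U) :
    ∃ w : U, w ≠ 0 ∧ ∃ x ∈ ⋀[ℂ]^2 U, y = ι ℂ w * x := by
  obtain ⟨w, hw, h⟩ := exists_degenerate_vector hU hy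
  have hwy : ι ℂ w * y = 0 :=
    eq_zero_of_forall_ι_mul_eq_zero (n := 4) (by omega) (ι_mul_mem w hy) h
  obtain ⟨d, hd⟩ := Module.Projective.exists_dual_eq_one ℂ hw
  exact ⟨w, hw, contraction d y, contraction_mem d 2 y hy, eq_ι_mul_contraction hd hwy⟩

end Contraction

/-- let `A ⊆ ⋀³V` be a Lagrangian subspace for `ω` and `W ⊆ V` a
5-dimensional subspace with `⋀³W ∩ A ≠ 0`.  Then there is a nonzero `v ∈ W` with
`F_v ∩ A ≠ 0` (i.e. the point `[v]` lies on the EPW-sextic `Y_A`). -/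
theorem exists_point_on_EPW (V : Type*) [AddCommGroup V] [Module ℂ V]
    [FiniteDimensional ℂ V] (hdim : Module.finrank ℂ V = 6)
    (vol : (⋀[ℂ]^6 V) ≃ₗ[ℂ] ℂ)
    (A : Submodule ℂ (ExteriorAlgebra ℂ V)) (hA : A ≤ ⋀[ℂ]^3 V)
    (hA10 : Module.finrank ℂ A = 10)
    (hALag : ∀ α β : ⋀[ℂ]^3 V, (α : ExteriorAlgebra ℂ V) ∈ A →
      (β : ExteriorAlgebra ℂ V) ∈ A → omegaForm vol α β = 0)
    (W : Submodule ℂ V) (hW : Module.finrank ℂ W = 5)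
    (hmeet : ∃ y : ExteriorAlgebra ℂ V, y ≠ 0 ∧ y ∈ wedge3image W ∧ y ∈ A) :
    ∃ v : V, v ∈ W ∧ v ≠ 0 ∧
      ∃ x : ExteriorAlgebra ℂ V, x ≠ 0 ∧ x ∈ Fsub v ∧ x ∈ A := by
  obtain ⟨y, hy0, ⟨y', hy', rfl⟩, hyA⟩ := hmeet
  obtain ⟨w, hw, x, hx, hxy⟩ := exists_eq_ι_mul hW hy'
  refine ⟨w, w.2, by simpa using hw, _, hy0, ⟨ExteriorAlgebra.map W.subtype x, ?_, ?_⟩, hyA⟩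
  · have h := Submodule.mem_map_of_mem (f := (ExteriorAlgebra.map W.subtype).toLinearMap) hx
    rw [exteriorPower, Submodule.map_pow] at h
    rw [ExteriorAlgebra.ι_range_map_map] at h
    have hle : Submodule.map (ι ℂ) (LinearMap.range W.subtype) ≤
        LinearMap.range (ι ℂ : V →ₗ[ℂ] ExteriorAlgebra ℂ V) := LinearMap.map_le_range
    exact pow_le_pow_left' hle 2 h
  · simp [hxy]

end
end

section
/- There is a (unique) isometry r of the lattice Λ with r(e₁) = e₂, r(e₂) = e₁ and r equal to the identity on {e₁,e₂}^⊥ ∩ Λ (such r exists since Λ is the internal orthogonal direct sum of ℤe₁, ℤe₂ and their orthogonal complement in Λ), and this isometry r does NOT belong to the subgroup Γ = Im(ρ). -/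
/-!
The isometry `r` is the reflection in `v = e₁ - e₂`, which has square `-4`. On `Λ = u^⊥` both
`(x, e₁)` and `(x, e₂)` are even, so `r x = x + ((x, v) / 2) v` has integral coefficients; in
coordinates `(x, v) / 2 = x_last - x_0`, where `x_0` is the first coordinate of the first
hyperbolic plane and `x_last` is the coordinate on `e₂`.

Uniqueness holds because every `x ∈ Λ` is `x_0 e₁ + x_last e₂` plus a vector orthogonal to `e₁`
and `e₂`.

If `r` were the restriction of an isometry `g` of `Λ̃` fixing `u`, then `g` would send `u + e₁`,
which is divisible by `2` in `Λ̃` because `u` and `e₁` lie in the same hyperbolic plane, to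
`u + e₂`, which is not divisible by `2`.
-/


/-- Index type for a basis of the lattice `Λ̃ = U³ ⊕ (−E₈)² ⊕ (−2)`:
three hyperbolic planes, two copies of `−E₈`, and one rank-1 piece. -/
abbrev LamIdx : Type := (Fin 3 × Fin 2) ⊕ ((Fin 2 × Fin 8) ⊕ Fin 1)

/-- The standard Gram matrix of the `E₈` lattice. -/
def E8mat : Matrix (Fin 8) (Fin 8) ℤ :=
  !![2, -1, 0, 0, 0, 0, 0, 0;
     -1, 2, -1, 0, 0, 0, 0, 0;
     0, -1, 2, -1, 0, 0, 0, 0;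
     0, 0, -1, 2, -1, 0, 0, 0;
     0, 0, 0, -1, 2, -1, 0, -1;
     0, 0, 0, 0, -1, 2, -1, 0;
     0, 0, 0, 0, 0, -1, 2, 0;
     0, 0, 0, 0, -1, 0, 0, 2]

/-- The Gram matrix of `Λ̃ = U³ ⊕ (−E₈)² ⊕ (−2)`: block diagonal with three hyperbolic
blocks, two `−E₈` blocks and one `(−2)` block. -/
def gram : Matrix LamIdx LamIdx ℤ := fun i j =>
  match i, j with
  | .inl (a, i), .inl (b, j) => if a = b then (if i = j then 0 else 1) else 0
  | .inr (.inl (a, i)), .inr (.inl (b, j)) => if a = b then -E8mat i j else 0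
  | .inr (.inr _), .inr (.inr _) => -2
  | _, _ => 0

/-- The bilinear form `(·,·)` of the lattice `Λ̃`. -/
noncomputable def B : (LamIdx → ℤ) →ₗ[ℤ] (LamIdx → ℤ) →ₗ[ℤ] ℤ :=
  Matrix.toLinearMap₂' ℤ gram

/-- The vector `u`, of square `2`, in the first hyperbolic summand. -/
def uu : LamIdx → ℤ := fun i =>
  if i = Sum.inl (0, 0) then 1 else if i = Sum.inl (0, 1) then 1 else 0

/-- The vector `e₁`, a generator of `u^⊥ ∩ U` in the first hyperbolic summand. -/
def ee1 : LamIdx → ℤ := fun i =>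
  if i = Sum.inl (0, 0) then 1 else if i = Sum.inl (0, 1) then -1 else 0

/-- The vector `e₂`, a generator of the `(−2)` summand. -/
def ee2 : LamIdx → ℤ := fun i =>
  if i = Sum.inr (Sum.inr 0) then 1 else 0

/-- The lattice `Λ = u^⊥ ⊆ Λ̃`. -/
noncomputable def Lam : Submodule ℤ (LamIdx → ℤ) := LinearMap.ker (B.flip uu)

/-- The orthogonal group `O(Λ)` of the lattice `Λ = u^⊥`. -/
noncomputable def OL : Subgroup ((↥Lam) ≃ₗ[ℤ] (↥Lam)) where
  carrier := {g | ∀ x y : Lam, B (g x : LamIdx → ℤ) (g y : LamIdx → ℤ) = B (x : LamIdx → ℤ) (y : LamIdx → ℤ)}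
  mul_mem' := by
    intro a b ha hb x y
    have : ∀ z : Lam, (a * b) z = a (b z) := fun z => rfl
    rw [this, this]
    rw [ha (b x) (b y), hb x y]
  one_mem' := by intro x y; rfl
  inv_mem' := by
    intro g hg x y
    have h := hg (g⁻¹ x) (g⁻¹ y)
    have e : ∀ z : Lam, g (g⁻¹ z) = z := fun z => g.apply_symm_apply z
    rw [e, e] at h
    exact h.symm

/-- The subgroup `Γ = Im(ρ) ≤ O(Λ)`: restrictions to `Λ = u^⊥` of isometries of `Λ̃`
fixing `u`. -/
noncomputable def Gamma : Subgroup ((↥Lam) ≃ₗ[ℤ] (↥Lam)) where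
  carrier := {h | ∃ g : (LamIdx → ℤ) ≃ₗ[ℤ] (LamIdx → ℤ),
    (∀ x y : LamIdx → ℤ, B (g x) (g y) = B x y) ∧ g uu = uu ∧
    ∀ x : Lam, (h x : LamIdx → ℤ) = g (x : LamIdx → ℤ)}
  mul_mem' := by
    rintro a b ⟨ga, hga, hgau, hgaa⟩ ⟨gb, hgb, hgbu, hgbb⟩
    refine ⟨ga * gb, fun x y => ?_, ?_, fun x => ?_⟩
    · have : ∀ z, (ga * gb) z = ga (gb z) := fun z => rfl
      rw [this, this, hga, hgb]
    · have : (ga * gb) uu = ga (gb uu) := rfl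
      rw [this, hgbu, hgau]
    · have h1 : (a * b) x = a (b x) := rfl
      have h2 : (ga * gb) (x : LamIdx → ℤ) = ga (gb (x : LamIdx → ℤ)) := rfl
      rw [h1, h2, hgaa, hgbb]
  one_mem' := ⟨1, fun x y => rfl, rfl, fun x => rfl⟩
  inv_mem' := by
    rintro h ⟨g, hg, hgu, hgh⟩
    refine ⟨g⁻¹, fun x y => ?_, ?_, fun x => ?_⟩
    · have e : ∀ z, g (g⁻¹ z) = z := fun z => g.apply_symm_apply z
      have := hg (g⁻¹ x) (g⁻¹ y)
      rw [e, e] at this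
      exact this.symm
    · have : g⁻¹ (g uu) = uu := g.symm_apply_apply uu
      rw [hgu] at this
      exact this
    · apply g.injective
      have e : ∀ z, g (g⁻¹ z) = z := fun z => g.apply_symm_apply z
      rw [e]
      rw [← hgh (h⁻¹ x)]
      have : h (h⁻¹ x) = x := h.apply_symm_apply x
      rw [this]

lemma ee1_mem : ee1 ∈ Lam := by
  refine LinearMap.mem_ker.mpr ?_
  rw [LinearMap.flip_apply]
  show Matrix.toLinearMap₂' ℤ gram ee1 uu = 0
  rw [Matrix.toLinearMap₂'_apply']
  decide

lemma ee2_mem : ee2 ∈ Lam := by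
  refine LinearMap.mem_ker.mpr ?_
  rw [LinearMap.flip_apply]
  show Matrix.toLinearMap₂' ℤ gram ee2 uu = 0
  rw [Matrix.toLinearMap₂'_apply']
  decide

/-- `e₁` as an element of `Λ`. -/
noncomputable def E1 : Lam := ⟨ee1, ee1_mem⟩

/-- `e₂` as an element of `Λ`. -/
noncomputable def E2 : Lam := ⟨ee2, ee2_mem⟩

/-- The first coordinate of the first hyperbolic plane. -/
abbrev i0 : LamIdx := Sum.inl (0, 0)

/-- The second coordinate of the first hyperbolic plane. -/
abbrev i1 : LamIdx := Sum.inl (0, 1)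

/-- The coordinate on `e₂`. -/
abbrev iL : LamIdx := Sum.inr (Sum.inr 0)

lemma B_apply (x y : LamIdx → ℤ) : B x y = ∑ i, ∑ j, x i * gram i j * y j := by
  simp [B, Matrix.toLinearMap₂'_apply, mul_comm, mul_left_comm]

lemma gram_symm (i j : LamIdx) : gram i j = gram j i := by
  have hE : ∀ a b, E8mat a b = E8mat b a := by
    intro a b
    fin_cases a <;> fin_cases b <;> rfl
  rcases i with ⟨a, i⟩ | ⟨a, i⟩ | i <;> rcases j with ⟨b, j⟩ | ⟨b, j⟩ | j <;>
    simp [gram, eq_comm, hE]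

lemma B_symm (x y : LamIdx → ℤ) : B x y = B y x := by
  rw [B_apply, B_apply, Finset.sum_comm]
  refine Finset.sum_congr rfl fun i _ => Finset.sum_congr rfl fun j _ => ?_
  rw [gram_symm j i]
  ring

lemma B_uu (x : LamIdx → ℤ) : B x uu = x i1 + x i0 := by
  simp [B_apply, Fintype.sum_sum_type, Fintype.sum_prod_type, Fin.sum_univ_succ, gram, uu]
  ring

lemma B_ee1 (x : LamIdx → ℤ) : B x ee1 = x i1 - x i0 := by
  simp [B_apply, Fintype.sum_sum_type, Fintype.sum_prod_type, Fin.sum_univ_succ, gram, ee1]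
  ring

lemma B_ee2 (x : LamIdx → ℤ) : B x ee2 = -2 * x iL := by
  simp [B_apply, Fintype.sum_sum_type, gram, ee2]
  ring

lemma Lam_coord (x : Lam) : (x : LamIdx → ℤ) i1 = -(x : LamIdx → ℤ) i0 := by
  have h : B (x : LamIdx → ℤ) uu = 0 := LinearMap.mem_ker.mp x.2
  rw [B_uu] at h
  omega

/-- Half of the pairing with `e₁ - e₂`, as a linear form on `Λ`; written in coordinates to avoid
integer division. -/
noncomputable def halfPair : Lam →ₗ[ℤ] ℤ :=
  (LinearMap.proj (R := ℤ) (φ := fun _ : LamIdx => ℤ) iL - LinearMap.proj i0) ∘ₗ Lam.subtype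

lemma halfPair_apply (x : Lam) :
    halfPair x = (x : LamIdx → ℤ) iL - (x : LamIdx → ℤ) i0 := rfl

lemma two_mul_halfPair (x : Lam) : 2 * halfPair x = B (x : LamIdx → ℤ) (ee1 - ee2) := by
  rw [map_sub, B_ee1, B_ee2, Lam_coord, halfPair_apply]
  ring

lemma halfPair_E1 : halfPair E1 = -1 := by
  simp [halfPair_apply, E1, ee1]

lemma halfPair_E2 : halfPair E2 = 1 := by
  simp [halfPair_apply, E2, ee2]

/-- The reflection of `Λ` in the vector `e₁ - e₂` of square `-4`. -/
noncomputable def reflV : Lam ≃ₗ[ℤ] Lam :=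
  LinearEquiv.ofInvolutive (LinearMap.id + halfPair.smulRight (E1 - E2)) fun x => by
    simp only [LinearMap.add_apply, LinearMap.id_apply, LinearMap.smulRight_apply, map_add,
      map_smul, map_sub, halfPair_E1, halfPair_E2]
    module

lemma reflV_apply (x : Lam) : reflV x = x + halfPair x • (E1 - E2) := rfl

lemma reflV_E1 : reflV E1 = E2 := by
  rw [reflV_apply, halfPair_E1]; module

lemma reflV_E2 : reflV E2 = E1 := by
  rw [reflV_apply, halfPair_E2]; module

lemma reflV_mem_OL : reflV ∈ OL := by
  intro x y
  have hv : B (ee1 - ee2) (ee1 - ee2) = -4 := by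
    rw [map_sub (B (ee1 - ee2)), B_ee1, B_ee2]
    simp [ee1, ee2]
  have hx := two_mul_halfPair x
  have hy := two_mul_halfPair y
  rw [B_symm] at hy
  have hc (z : Lam) : (reflV z : LamIdx → ℤ) = (z : LamIdx → ℤ) + halfPair z • (ee1 - ee2) := rfl
  rw [hc, hc]
  simp only [map_add, map_smul, LinearMap.add_apply, LinearMap.smul_apply, smul_eq_mul, hv,
    ← hx, ← hy]
  ring

lemma reflV_not_mem_Gamma : reflV ∉ Gamma := by
  rintro ⟨g, -, hu, hg⟩
  -- `w` is half of `u + e₁`.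
  let w : LamIdx → ℤ := Pi.single i0 1
  have hw : (2 : ℤ) • w = uu + ee1 := by
    ext i
    by_cases h : i = i0
    · subst h; simp [w, uu, ee1]
    · by_cases h' : i = i1 <;> simp_all [w, uu, ee1]
  have h1 : g ee1 = ee2 := by
    have := hg E1
    rw [reflV_E1] at this
    exact this.symm
  have h2 : (2 : ℤ) • g w = uu + ee2 := by
    rw [← map_smul, hw, map_add, hu, h1]
  have h3 := congrFun h2 i0
  simp [uu, ee2] at h3
  omega

/-- A linear map exchanging `e₁` and `e₂` and fixing their orthogonal complement in `Λ` is
determined by this, since `ℤe₁`, `ℤe₂` and that complement span `Λ`. -/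
lemma eq_reflV_of_swap (r : Lam ≃ₗ[ℤ] Lam) (h1 : r E1 = E2) (h2 : r E2 = E1)
    (h : ∀ x : Lam, B (x : LamIdx → ℤ) ee1 = 0 → B (x : LamIdx → ℤ) ee2 = 0 → r x = x) :
    r = reflV := by
  ext1 x
  let a := (x : LamIdx → ℤ) i0
  let b := (x : LamIdx → ℤ) iL
  let y : Lam := x - a • E1 - b • E2
  have hc : (y : LamIdx → ℤ) = (x : LamIdx → ℤ) - a • ee1 - b • ee2 := rfl
  have hy : r y = y := by
    apply h
    · rw [B_ee1, Lam_coord, hc]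
      simp [a, ee1, ee2]
    · rw [B_ee2, hc]
      simp [b, ee1, ee2]
  have hx : x = y + a • E1 + b • E2 := by simp only [y]; abel
  have hr : r x = y + a • E2 + b • E1 := by
    conv_lhs => rw [hx]
    rw [map_add, map_add, map_smul, map_smul, h1, h2, hy]
  have hp : halfPair x = b - a := rfl
  rw [hr, reflV_apply, hp]
  simp only [y]
  module

/-- there is a unique isometry `r` of `Λ` with `r e₁ = e₂`, `r e₂ = e₁`,
and `r` the identity on `{e₁,e₂}^⊥ ∩ Λ`; this isometry does not belong to `Γ = Im(ρ)`. -/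
theorem reflection_not_in_Gamma :
    ∃ r : (↥Lam) ≃ₗ[ℤ] (↥Lam),
      (r ∈ OL ∧ r E1 = E2 ∧ r E2 = E1 ∧
        ∀ x : Lam, B (x : LamIdx → ℤ) ee1 = 0 → B (x : LamIdx → ℤ) ee2 = 0 → r x = x) ∧
      r ∉ Gamma ∧
      ∀ r' : (↥Lam) ≃ₗ[ℤ] (↥Lam),
        (r' ∈ OL ∧ r' E1 = E2 ∧ r' E2 = E1 ∧
          ∀ x : Lam, B (x : LamIdx → ℤ) ee1 = 0 → B (x : LamIdx → ℤ) ee2 = 0 → r' x = x) →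
        r' = r := by
  refine ⟨reflV, ⟨reflV_mem_OL, reflV_E1, reflV_E2, fun x h1 h2 => ?_⟩, reflV_not_mem_Gamma,
    fun r' ⟨_, h1, h2, h⟩ => eq_reflV_of_swap r' h1 h2 h⟩
  have hp := two_mul_halfPair x
  rw [map_sub, h1, h2] at hp
  rw [reflV_apply, show halfPair x = 0 by omega, zero_smul, add_zero]
end
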